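/- arXiv:math/0408073 — 5 statements merged into one kernel-verified Lean document; each statement's English description precedes it below -/
import Mathlib

section
/- Let α, β : ℤ → ℂ and F, G, H : ℤ → ℂ[z] satisfy the stationary zero-curvature relations (R1)–(R4). Then the polynomial G(n)² − F(n)·H(n) ∈ ℂ[z] is a lattice constant, i.e., G(n)² − F(n)·H(n) = G(n₀)² − F(n₀)·H(n₀) for all n, n₀ ∈ ℤ. -/
open Polynomial

/-- Under the stationary zero-curvature relations (R1)–(R4), the polynomial
`G(n)² − F(n)·H(n)` is a lattice constant. -/
theorem zero_curvature_lattice_constant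
    (α β : ℤ → ℂ) (F G H : ℤ → Polynomial ℂ)
    (hR1 : ∀ n : ℤ, F n - X * F (n - 1) - C (α n) * (G n + G (n - 1)) = 0)
    (hR2 : ∀ n : ℤ, X * C (β n) * (G n + G (n - 1)) + H (n - 1) - X * H n = 0)
    (hR3 : ∀ n : ℤ, X * (G (n - 1) - G n) + C (α n) * H (n - 1) + X * C (β n) * F n = 0)
    (hR4 : ∀ n : ℤ, G n - G (n - 1) - C (α n) * H n - X * C (β n) * F (n - 1) = 0) :
    ∀ n n₀ : ℤ, (G n) ^ 2 - F n * H n = (G n₀) ^ 2 - F n₀ * H n₀ := by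
  have step : ∀ n : ℤ, (G n) ^ 2 - F n * H n = (G (n - 1)) ^ 2 - F (n - 1) * H (n - 1) := by
    intro n
    apply mul_left_cancel₀ (X_ne_zero (R := ℂ))
    linear_combination F n * hR2 n - H (n - 1) * hR1 n - (G n + G (n - 1)) * hR3 n
  have zero : ∀ n : ℤ, (G n) ^ 2 - F n * H n = (G 0) ^ 2 - F 0 * H 0 := by
    intro n
    induction n using Int.induction_on with
    | zero => rfl
    | succ i ih =>
      have h := step ((i : ℤ) + 1)
      rw [add_sub_cancel_right] at h
      exact h.trans ih
    | pred i ih => exact (step (-(i : ℤ))).symm.trans ih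
  intro n n₀
  exact (zero n).trans (zero n₀).symm
end

section
/- Suppose the polynomials F_p(·,n), G_{p+1}(·,n), H_{p+1}(·,n) built from the coefficient sequences f_ℓ, g_ℓ, h_ℓ (with g₀(n) = 1 for all n) satisfy the stationary zero-curvature relations (R1)–(R4) for all n ∈ ℤ. Then: (a) f₀(n) = −2α(n+1) and h₀(n) = 2β(n) for all n; (b) for every ℓ = 0, …, p−1 and all n: g_{ℓ+1}(n) − g_{ℓ+1}(n−1) = α(n)·h_ℓ(n−1) + β(n)·f_ℓ(n), f_{ℓ+1}(n−1) = f_ℓ(n) − α(n)·(g_{ℓ+1}(n) + g_{ℓ+1}(n−1)), and h_{ℓ+1}(n) = h_ℓ(n−1) + β(n)·(g_{ℓ+1}(n) + g_{ℓ+1}(n−1)); (c) for all n: f_p(n) = α(n)·(g_{p+1}(n) + g_{p+1}(n−1)), β(n)·(g_{p+1}(n) + g_{p+1}(n−1)) + h_p(n−1) − h_{p+1}(n) = 0, h_{p+1}(n) = 0, g_{p+1}(n−1) − g_{p+1}(n) + α(n)·h_p(n−1) + β(n)·f_p(n) = 0, and α(n)·h_{p+1}(n) + g_{p+1}(n−1)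 − g_{p+1}(n) = 0; in particular g_{p+1}(n) is independent of n. -/
open Polynomial

/-- If the polynomials `F_p(·,n) = Σ_{ℓ=0}^{p} f_{p−ℓ}(n) z^ℓ`,
`G_{p+1}(·,n) = Σ_{ℓ=0}^{p+1} g_{p+1−ℓ}(n) z^ℓ`, `H_{p+1}(·,n) = Σ_{ℓ=0}^{p+1} h_{p+1−ℓ}(n) z^ℓ`
(with `g₀ ≡ 1`) satisfy the stationary zero-curvature relations (R1)–(R4) for all `n ∈ ℤ`,
then (a) `f₀(n) = −2α(n+1)`, `h₀(n) = 2β(n)`; (b) the SB recursion relations hold for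
`ℓ = 0, …, p−1`; (c) the extra relations at the top level hold, and in particular
`g_{p+1}` is a lattice constant. -/
theorem zero_curvature_equals_recursion
    (α β : ℤ → ℂ) (p : ℕ) (hp : 1 ≤ p)
    (f g h : ℕ → ℤ → ℂ)
    (hg0 : ∀ n : ℤ, g 0 n = 1)
    (F G H : ℤ → Polynomial ℂ)
    (hF : ∀ n : ℤ, F n = ∑ ℓ ∈ Finset.range (p + 1), C (f (p - ℓ) n) * X ^ ℓ)
    (hG : ∀ n : ℤ, G n = ∑ ℓ ∈ Finset.range (p + 2), C (g (p + 1 - ℓ) n) * X ^ ℓ)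
    (hH : ∀ n : ℤ, H n = ∑ ℓ ∈ Finset.range (p + 2), C (h (p + 1 - ℓ) n) * X ^ ℓ)
    (hR1 : ∀ n : ℤ, F n - X * F (n - 1) - C (α n) * (G n + G (n - 1)) = 0)
    (hR2 : ∀ n : ℤ, X * C (β n) * (G n + G (n - 1)) + H (n - 1) - X * H n = 0)
    (hR3 : ∀ n : ℤ, X * (G (n - 1) - G n) + C (α n) * H (n - 1) + X * C (β n) * F n = 0)
    (hR4 : ∀ n : ℤ, G n - G (n - 1) - C (α n) * H n - X * C (β n) * F (n - 1) = 0) :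
    -- (a)
    (∀ n : ℤ, f 0 n = -2 * α (n + 1)) ∧
    (∀ n : ℤ, h 0 n = 2 * β n) ∧
    -- (b)
    (∀ ℓ : ℕ, ℓ < p → ∀ n : ℤ,
      g (ℓ + 1) n - g (ℓ + 1) (n - 1) = α n * h ℓ (n - 1) + β n * f ℓ n) ∧
    (∀ ℓ : ℕ, ℓ < p → ∀ n : ℤ,
      f (ℓ + 1) (n - 1) = f ℓ n - α n * (g (ℓ + 1) n + g (ℓ + 1) (n - 1))) ∧
    (∀ ℓ : ℕ, ℓ < p → ∀ n : ℤ,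
      h (ℓ + 1) n = h ℓ (n - 1) + β n * (g (ℓ + 1) n + g (ℓ + 1) (n - 1))) ∧
    -- (c)
    (∀ n : ℤ, f p n = α n * (g (p + 1) n + g (p + 1) (n - 1))) ∧
    (∀ n : ℤ, β n * (g (p + 1) n + g (p + 1) (n - 1)) + h p (n - 1) - h (p + 1) n = 0) ∧
    (∀ n : ℤ, h (p + 1) n = 0) ∧
    (∀ n : ℤ, g (p + 1) (n - 1) - g (p + 1) n + α n * h p (n - 1) + β n * f p n = 0) ∧
    (∀ n : ℤ, α n * h (p + 1) n + g (p + 1) (n - 1) - g (p + 1) n = 0) ∧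
    (∀ n n' : ℤ, g (p + 1) n = g (p + 1) n') := by
  have cF : ∀ n k, k ≤ p → (F n).coeff k = f (p - k) n := by
    intro n k hk
    rw [hF, Polynomial.finsetSum_coeff]
    simp [Polynomial.coeff_C_mul, Polynomial.coeff_X_pow]
    intro hh; omega
  have cF' : ∀ n, (F n).coeff (p + 1) = 0 := by
    intro n
    rw [hF, Polynomial.finsetSum_coeff]
    simp [Polynomial.coeff_C_mul, Polynomial.coeff_X_pow]
  have cG : ∀ n k, k ≤ p + 1 → (G n).coeff k = g (p + 1 - k) n := by
    intro n k hk
    rw [hG, Polynomial.finsetSum_coeff]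
    simp [Polynomial.coeff_C_mul, Polynomial.coeff_X_pow]
    intro hh; omega
  have cH : ∀ n k, k ≤ p + 1 → (H n).coeff k = h (p + 1 - k) n := by
    intro n k hk
    rw [hH, Polynomial.finsetSum_coeff]
    simp [Polynomial.coeff_C_mul, Polynomial.coeff_X_pow]
    intro hh; omega
  have cH' : ∀ n, (H n).coeff (p + 2) = 0 := by
    intro n
    rw [hH, Polynomial.finsetSum_coeff]
    simp [Polynomial.coeff_C_mul, Polynomial.coeff_X_pow]
  have r1z : ∀ n, (F n).coeff 0 - α n * ((G n).coeff 0 + (G (n-1)).coeff 0) = 0 := by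
    intro n
    have := congrArg (fun q => Polynomial.coeff q 0) (hR1 n)
    simpa [mul_assoc] using this
  have r1 : ∀ n k, (F n).coeff (k+1) - (F (n-1)).coeff k
      - α n * ((G n).coeff (k+1) + (G (n-1)).coeff (k+1)) = 0 := by
    intro n k
    have := congrArg (fun q => Polynomial.coeff q (k+1)) (hR1 n)
    simpa only [mul_assoc, coeff_sub, coeff_add, coeff_X_mul, coeff_C_mul, coeff_zero] using this
  have r2z : ∀ n, (H (n-1)).coeff 0 = 0 := by
    intro n
    have := congrArg (fun q => Polynomial.coeff q 0) (hR2 n)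
    simpa [mul_assoc] using this
  have r2 : ∀ n k, β n * ((G n).coeff k + (G (n-1)).coeff k) + (H (n-1)).coeff (k+1)
      - (H n).coeff k = 0 := by
    intro n k
    have := congrArg (fun q => Polynomial.coeff q (k+1)) (hR2 n)
    simpa only [mul_assoc, coeff_sub, coeff_add, coeff_X_mul, coeff_C_mul, coeff_zero] using this
  have r3 : ∀ n k, ((G (n-1)).coeff k - (G n).coeff k) + α n * (H (n-1)).coeff (k+1)
      + β n * (F n).coeff k = 0 := by
    intro n k
    have := congrArg (fun q => Polynomial.coeff q (k+1)) (hR3 n)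
    simpa only [mul_assoc, coeff_sub, coeff_add, coeff_X_mul, coeff_C_mul, coeff_zero] using this
  have r4z : ∀ n, (G n).coeff 0 - (G (n-1)).coeff 0 - α n * (H n).coeff 0 = 0 := by
    intro n
    have := congrArg (fun q => Polynomial.coeff q 0) (hR4 n)
    simpa [mul_assoc] using this
  have hz : ∀ n, h (p + 1) n = 0 := by
    intro n
    have := r2z (n + 1)
    rw [cH _ _ (by omega)] at this
    simpa using this
  have g4 : ∀ n, g (p + 1) n - g (p + 1) (n - 1) - α n * h (p + 1) n = 0 := by
    intro n
    have := r4z n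
    rw [cG _ _ (by omega), cG _ _ (by omega), cH _ _ (by omega)] at this
    simpa using this
  -- relations at index `ℓ ≤ p`
  have s3 : ∀ ℓ, ℓ ≤ p → ∀ n, g (ℓ + 1) (n - 1) - g (ℓ + 1) n + α n * h ℓ (n - 1)
      + β n * f ℓ n = 0 := by
    intro ℓ hℓ n
    have := r3 n (p - ℓ)
    rw [cG _ _ (by omega), cG _ _ (by omega), cH _ _ (by omega), cF _ _ (by omega),
      show p + 1 - (p - ℓ) = ℓ + 1 by omega, show p + 1 - (p - ℓ + 1) = ℓ by omega,
      show p - (p - ℓ) = ℓ by omega] at this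
    exact this
  have s2 : ∀ ℓ, ℓ ≤ p → ∀ n, β n * (g (ℓ + 1) n + g (ℓ + 1) (n - 1)) + h ℓ (n - 1)
      - h (ℓ + 1) n = 0 := by
    intro ℓ hℓ n
    have := r2 n (p - ℓ)
    rw [cG _ _ (by omega), cG _ _ (by omega), cH _ _ (by omega), cH _ _ (by omega),
      show p + 1 - (p - ℓ) = ℓ + 1 by omega, show p + 1 - (p - ℓ + 1) = ℓ by omega] at this
    exact this
  refine ⟨?_, ?_, ?_, ?_, ?_, ?_, s2 p le_rfl, hz, s3 p le_rfl, ?_, ?_⟩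
  · intro n
    have := r1 (n + 1) p
    rw [cF', cF _ _ le_rfl, cG _ _ le_rfl, cG _ _ le_rfl] at this
    simp only [Nat.sub_self, hg0, add_sub_cancel_right] at this
    linear_combination -this
  · intro n
    have := r2 n (p + 1)
    rw [cH', cG _ _ le_rfl, cG _ _ le_rfl, cH _ _ le_rfl] at this
    simp only [Nat.sub_self, hg0] at this
    linear_combination -this
  · intro ℓ hℓ n
    linear_combination -s3 ℓ hℓ.le n
  · intro ℓ hℓ n
    have := r1 n (p - ℓ - 1)
    rw [cF _ _ (by omega), cF _ _ (by omega), cG _ _ (by omega), cG _ _ (by omega),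
      show p - (p - ℓ - 1 + 1) = ℓ by omega, show p - (p - ℓ - 1) = ℓ + 1 by omega,
      show p + 1 - (p - ℓ - 1 + 1) = ℓ + 1 by omega] at this
    linear_combination -this
  · intro ℓ hℓ n
    linear_combination -s2 ℓ hℓ.le n
  · intro n
    have := r1z n
    rw [cF _ _ (by omega), cG _ _ (by omega), cG _ _ (by omega)] at this
    simp only [Nat.sub_zero] at this
    linear_combination this
  · intro n
    linear_combination -g4 n
  · have step : ∀ n, g (p + 1) n = g (p + 1) (n - 1) := by
      intro n
      have := g4 n
      rw [hz] at this
      linear_combination this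
    have c0 : ∀ n : ℤ, g (p + 1) n = g (p + 1) 0 := by
      intro n
      induction n using Int.induction_on with
      | zero => rfl
      | succ i ih => rw [step, add_sub_cancel_right, ih]
      | pred i ih => rw [← step, ih]
    intro n n'
    rw [c0 n, c0 n']
end

section
/- Let z, y, a, b, F, F⁻, G, G⁻, H ∈ ℂ with F ≠ 0 and F⁻ ≠ 0, and suppose F − z·F⁻ − a·(G + G⁻) = 0, G − G⁻ − a·H − z·b·F⁻ = 0, and y² = G² − F·H. Define φ = (y + G)/F and φ⁻ = (y + G⁻)/F⁻. Then φ satisfies the Riccati-type equation a·φ·φ⁻ − φ⁻ + z·φ = z·b. -/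
/-- Given the zero-curvature relations at one lattice site and the curve relation
`y² = G² − F·H`, the function `φ = (y + G)/F` (with `φ⁻ = (y + G⁻)/F⁻`) satisfies the
Riccati-type equation `a·φ·φ⁻ − φ⁻ + z·φ = z·b`. -/
theorem riccati_from_zero_curvature
    (z y a b F Fm G Gm H : ℂ) (hF : F ≠ 0) (hFm : Fm ≠ 0)
    (h1 : F - z * Fm - a * (G + Gm) = 0)
    (h2 : G - Gm - a * H - z * b * Fm = 0)
    (hy : y ^ 2 = G ^ 2 - F * H) :
    a * ((y + G) / F) * ((y + Gm) / Fm) - (y + Gm) / Fm + z * ((y + G) / F) = z * b := by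
  have key : a * (y + G) * (y + Gm) - F * (y + Gm) + z * Fm * (y + G) - z * b * (F * Fm) = 0 := by
    linear_combination a * hy - (y + G) * h1 + F * h2
  have e : a * ((y + G) / F) * ((y + Gm) / Fm) - (y + Gm) / Fm + z * ((y + G) / F) - z * b
      = (a * (y + G) * (y + Gm) - F * (y + Gm) + z * Fm * (y + G) - z * b * (F * Fm))
        / (F * Fm) := by
    field_simp
  rw [key, zero_div] at e
  exact sub_eq_zero.mp e
end

section
/- Let z ∈ ℂ, let α, β : ℤ → ℂ, and let φ : ℤ → ℂ satisfy φ(n) ≠ 0 and the Riccati-type equation α(n)·φ(n)·φ(n−1) − φ(n−1) + z·φ(n) = z·β(n) for all n ∈ ℤ. Assume moreover z + α(m)·φ(m−1) ≠ 0 and z·β(m)·φ(m−1)^{−1} + 1 ≠ 0 for all m ∈ ℤ. Then the Baker–Akhiezer components satisfy ψ₂(n) = φ(n)·ψ₁(n) for all n ∈ ℤ. -/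
/-- First Baker–Akhiezer component: `ψ₁(n₀) = 1`,
`ψ₁(n) = ∏_{m=n₀+1}^{n} (z + α(m)·φ(m−1))` for `n ≥ n₀+1`, and
`ψ₁(n) = ∏_{m=n+1}^{n₀} (z + α(m)·φ(m−1))⁻¹` for `n ≤ n₀−1`. -/
noncomputable def psi1 (z : ℂ) (α φ : ℤ → ℂ) (n₀ n : ℤ) : ℂ :=
  if n₀ ≤ n then ∏ m ∈ Finset.Icc (n₀ + 1) n, (z + α m * φ (m - 1))
  else (∏ m ∈ Finset.Icc (n + 1) n₀, (z + α m * φ (m - 1)))⁻¹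

/-- Second Baker–Akhiezer component: `ψ₂(n₀) = φ(n₀)`,
`ψ₂(n) = φ(n₀)·∏_{m=n₀+1}^{n} (z·β(m)·φ(m−1)⁻¹ + 1)` for `n ≥ n₀+1`, and
`ψ₂(n) = φ(n₀)·∏_{m=n+1}^{n₀} (z·β(m)·φ(m−1)⁻¹ + 1)⁻¹` for `n ≤ n₀−1`. -/
noncomputable def psi2 (z : ℂ) (β φ : ℤ → ℂ) (n₀ n : ℤ) : ℂ :=
  φ n₀ *
    (if n₀ ≤ n then ∏ m ∈ Finset.Icc (n₀ + 1) n, (z * β m * (φ (m - 1))⁻¹ + 1)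
     else (∏ m ∈ Finset.Icc (n + 1) n₀, (z * β m * (φ (m - 1))⁻¹ + 1))⁻¹)

/-- Telescoping identity over an interval of integers. -/
theorem ba_telescope (z : ℂ) (α β φ : ℤ → ℂ)
    (hφ : ∀ n : ℤ, φ n ≠ 0)
    (hRic : ∀ n : ℤ, α n * φ n * φ (n - 1) - φ (n - 1) + z * φ n = z * β n)
    (a : ℤ) (k : ℕ) :
    φ a * ∏ m ∈ Finset.Icc (a + 1) (a + k), (z * β m * (φ (m - 1))⁻¹ + 1)
      = φ (a + k) * ∏ m ∈ Finset.Icc (a + 1) (a + k), (z + α m * φ (m - 1)) := by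
  induction k with
  | zero => simp
  | succ k ih =>
    have hI : Finset.Icc (a + 1) (a + ((k + 1 : ℕ) : ℤ))
        = insert (a + k + 1) (Finset.Icc (a + 1) (a + k)) := by
      ext x
      simp only [Finset.mem_Icc, Finset.mem_insert]
      push_cast
      omega
    have hn : a + (k : ℤ) + 1 ∉ Finset.Icc (a + 1) (a + (k : ℤ)) := by
      simp
    rw [hI, Finset.prod_insert hn, Finset.prod_insert hn]
    have hk : a + ((k + 1 : ℕ) : ℤ) = a + k + 1 := by push_cast; ring
    rw [hk, mul_left_comm, ih]
    have h := hRic (a + k + 1)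
    have h0 := hφ (a + k)
    rw [add_sub_cancel_right] at h ⊢
    have key : (z * β (a + k + 1) * (φ (a + k))⁻¹ + 1) * φ (a + k)
        = φ (a + k + 1) * (z + α (a + k + 1) * φ (a + k)) := by
      rw [add_mul, inv_mul_cancel_right₀ h0]
      linear_combination -h
    rw [← mul_assoc, key, mul_assoc]

/-- If `φ` is nowhere vanishing and satisfies the Riccati-type equation, and all
transfer factors are nonzero, then `ψ₂(n) = φ(n)·ψ₁(n)` for all `n ∈ ℤ`. -/
theorem baker_akhiezer_ratio
    (z : ℂ) (α β : ℤ → ℂ) (φ : ℤ → ℂ) (n₀ : ℤ)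
    (hφ : ∀ n : ℤ, φ n ≠ 0)
    (hRic : ∀ n : ℤ, α n * φ n * φ (n - 1) - φ (n - 1) + z * φ n = z * β n)
    (hfac1 : ∀ m : ℤ, z + α m * φ (m - 1) ≠ 0)
    (hfac2 : ∀ m : ℤ, z * β m * (φ (m - 1))⁻¹ + 1 ≠ 0) :
    ∀ n : ℤ, psi2 z β φ n₀ n = φ n * psi1 z α φ n₀ n := by
  intro n
  unfold psi1 psi2
  split_ifs with hle
  · obtain ⟨k, rfl⟩ := Int.le.dest hle
    exact ba_telescope z α β φ hφ hRic n₀ k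
  · obtain ⟨k, rfl⟩ := Int.le.dest (le_of_lt (not_le.mp hle))
    have h := ba_telescope z α β φ hφ hRic n k
    rw [← div_eq_mul_inv, ← div_eq_mul_inv, div_eq_div_iff
      (Finset.prod_ne_zero_iff.mpr fun m _ => hfac2 m)
      (Finset.prod_ne_zero_iff.mpr fun m _ => hfac1 m)]
    exact h.symm
end

section
/- Let z ∈ ℂ, let α, β : ℤ → ℂ, and let φ : ℤ → ℂ satisfy φ(n) ≠ 0 and the Riccati-type equation α(n)·φ(n)·φ(n−1) − φ(n−1) + z·φ(n) = z·β(n) for all n ∈ ℤ. Assume moreover z + α(m)·φ(m−1) ≠ 0 and z·β(m)·φ(m−1)^{−1} + 1 ≠ 0 for all m ∈ ℤ. Then the Baker–Akhiezer components satisfy, for all n ∈ ℤ, the transfer relations ψ₁(n) = z·ψ₁(n−1) + α(n)·ψ₂(n−1) and ψ₂(n) = z·β(n)·ψ₁(n−1) + ψ₂(n−1); equivalently, the vector Ψ(n) = (ψ₁(n), ψ₂(n))ᵀ satisfies Ψ(n) = U(z,n)·Ψ(n−1) with U(z,n) = [[z, α(n)], [z·β(n), 1]]. -/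
theorem ba_prod_step (f : ℤ → ℂ) (hf : ∀ m, f m ≠ 0) (n₀ n : ℤ) :
    (if n₀ ≤ n then ∏ m ∈ Finset.Icc (n₀ + 1) n, f m
      else (∏ m ∈ Finset.Icc (n + 1) n₀, f m)⁻¹) =
    f n * (if n₀ ≤ n - 1 then ∏ m ∈ Finset.Icc (n₀ + 1) (n - 1), f m
      else (∏ m ∈ Finset.Icc (n - 1 + 1) n₀, f m)⁻¹) := by
  by_cases h1 : n₀ ≤ n - 1
  · have h2 : n₀ ≤ n := by omega
    have h3 : Finset.Icc (n₀ + 1) n = insert n (Finset.Icc (n₀ + 1) (n - 1)) := by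
      ext x
      simp only [Finset.mem_Icc, Finset.mem_insert]
      omega
    rw [if_pos h1, if_pos h2, h3, Finset.prod_insert (by simp)]
  · by_cases h2 : n₀ < n
    · omega
    · have h3 : Finset.Icc (n - 1 + 1) n₀ = insert n (Finset.Icc (n + 1) n₀) := by
        ext x
        simp only [Finset.mem_Icc, Finset.mem_insert]
        omega
      rw [if_neg h1, h3, Finset.prod_insert (by simp), mul_inv, mul_inv_cancel_left₀ (hf n)]
      by_cases h4 : n₀ ≤ n
      · have h5 : n = n₀ := by omega
        subst h5
        simp
      · rw [if_neg h4]

/-- If `φ` is nowhere vanishing and satisfies the Riccati-type equation, and all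
transfer factors are nonzero, then the Baker–Akhiezer components satisfy the transfer relations
`ψ₁(n) = z·ψ₁(n−1) + α(n)·ψ₂(n−1)` and `ψ₂(n) = z·β(n)·ψ₁(n−1) + ψ₂(n−1)`; equivalently,
`Ψ(n) = U(z,n)·Ψ(n−1)` with `U(z,n) = [[z, α(n)], [z·β(n), 1]]`. -/
theorem baker_akhiezer_transfer
    (z : ℂ) (α β : ℤ → ℂ) (φ : ℤ → ℂ) (n₀ : ℤ)
    (hφ : ∀ n : ℤ, φ n ≠ 0)
    (hRic : ∀ n : ℤ, α n * φ n * φ (n - 1) - φ (n - 1) + z * φ n = z * β n)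
    (hfac1 : ∀ m : ℤ, z + α m * φ (m - 1) ≠ 0)
    (hfac2 : ∀ m : ℤ, z * β m * (φ (m - 1))⁻¹ + 1 ≠ 0) :
    ∀ n : ℤ,
      (psi1 z α φ n₀ n = z * psi1 z α φ n₀ (n - 1) + α n * psi2 z β φ n₀ (n - 1) ∧
       psi2 z β φ n₀ n = z * β n * psi1 z α φ n₀ (n - 1) + psi2 z β φ n₀ (n - 1)) ∧
      (!![z, α n; z * β n, 1] : Matrix (Fin 2) (Fin 2) ℂ).mulVec
          ![psi1 z α φ n₀ (n - 1), psi2 z β φ n₀ (n - 1)]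
        = ![psi1 z α φ n₀ n, psi2 z β φ n₀ n] := by
  have s1 : ∀ n, psi1 z α φ n₀ n = (z + α n * φ (n - 1)) * psi1 z α φ n₀ (n - 1) := fun n =>
    ba_prod_step (fun m => z + α m * φ (m - 1)) hfac1 n₀ n
  have s2 : ∀ n, psi2 z β φ n₀ n
      = (z * β n * (φ (n - 1))⁻¹ + 1) * psi2 z β φ n₀ (n - 1) := fun n => by
    have h := ba_prod_step (fun m => z * β m * (φ (m - 1))⁻¹ + 1) hfac2 n₀ n
    unfold psi2
    rw [h]
    ring
  have r : ∀ n, (z * β n * (φ (n - 1))⁻¹ + 1) * φ (n - 1) = φ n * (z + α n * φ (n - 1)) :=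
    fun n => by
      have h := hRic n
      have h0 := hφ (n - 1)
      field_simp
      linear_combination -h
  have key : ∀ n, psi2 z β φ n₀ n = φ n * psi1 z α φ n₀ n := by
    intro n
    induction n using Int.inductionOn' (b := n₀) with
    | zero => simp [psi1, psi2]
    | succ k _ ih =>
      have a := s1 (k + 1)
      have b := s2 (k + 1)
      have c := r (k + 1)
      rw [add_sub_cancel_right] at a b c
      rw [a, b, ih]
      linear_combination psi1 z α φ n₀ k * c
    | pred k _ ih =>
      rw [s1 k, s2 k] at ih
      apply mul_left_cancel₀ (hfac2 k)
      rw [ih]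
      linear_combination -psi1 z α φ n₀ (k - 1) * r k
  intro n
  have e1 : psi1 z α φ n₀ n = z * psi1 z α φ n₀ (n - 1) + α n * psi2 z β φ n₀ (n - 1) := by
    rw [s1 n, key (n - 1)]
    ring
  have e2 : psi2 z β φ n₀ n = z * β n * psi1 z α φ n₀ (n - 1) + psi2 z β φ n₀ (n - 1) := by
    rw [s2 n, key (n - 1)]
    have h0 := hφ (n - 1)
    field_simp
  refine ⟨⟨e1, e2⟩, ?_⟩
  rw [e1, e2]
  ext i
  fin_cases i <;> simp [Matrix.mulVec, dotProduct, Fin.sum_univ_two]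
end
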